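/- For n ≥ 3 let β_n ∈ (1,2) be the multinacci number of order n, i.e. the unique root in (1,2) of x^n = x^{n−1} + x^{n−2} + ⋯ + x + 1 (with β_2 the golden mean (1+√5)/2). Then the Hausdorff dimension of the univoque set satisfies dim_H(U_{β_n}) = log β_{n−1} / log β_n. -/

import Mathlib

/-- The value `Σ_{n≥1} a_n β^{-n}` of a digit sequence (indexed from 0, so `a i = a_{i+1}`). -/
noncomputable def betaVal (β : ℝ) (a : ℕ → ℕ) : ℝ := ∑' n : ℕ, (a n : ℝ) / β ^ (n + 1)

/-- `Ũ_β`: the set of 0-1 sequences that are the unique β-expansion of their value. -/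
def UTilde (β : ℝ) : Set (ℕ → ℕ) :=
  {a | (∀ n, a n ≤ 1) ∧
    ∀ b : ℕ → ℕ, (∀ n, b n ≤ 1) → betaVal β b = betaVal β a → b = a}

/-- The word `w` occurs in the sequence `x` starting at position `n`. -/
def OccursAt (w : List ℕ) (x : ℕ → ℕ) (n : ℕ) : Prop :=
  ∀ i : Fin w.length, x (n + i.1) = w.get i

/-- `Y` is a subshift of finite type inside the ambient full shift `{0,1}^ℕ`: there is a
finite set `F` of forbidden words such that `Y` consists exactly of the 0-1 sequences in
which no word of `F` occurs. -/
def IsSFT01 (Y : Set (ℕ → ℕ)) : Prop :=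
  ∃ F : Set (List ℕ), F.Finite ∧
    Y = {x | (∀ n, x n ≤ 1) ∧ ∀ w ∈ F, ∀ n, ¬ OccursAt w x n}

/-- Strict lexicographic order on sequences. -/
def LexLt (a b : ℕ → ℕ) : Prop :=
  ∃ n, (∀ k < n, a k = b k) ∧ a n < b n

/-- `η` is the quasi-greedy expansion of `1` in base `β`: the lexicographically largest
0-1 sequence with infinitely many digits `1` whose value is `1`. -/
def QuasiGreedy (β : ℝ) (η : ℕ → ℕ) : Prop :=
  (∀ n, η n ≤ 1) ∧ (∀ N, ∃ n ≥ N, η n = 1) ∧ betaVal β η = 1 ∧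
    ∀ ζ : ℕ → ℕ, (∀ n, ζ n ≤ 1) → (∀ N, ∃ n ≥ N, ζ n = 1) →
      betaVal β ζ = 1 → ζ ≠ η → LexLt ζ η

/-- The univoque set `U_β`: points of `[0, 1/(β-1)]` with a unique β-expansion. -/
def Uset (β : ℝ) : Set ℝ :=
  {x | x ∈ Set.Icc 0 (1 / (β - 1)) ∧
    ∃! a : ℕ → ℕ, (∀ n, a n ≤ 1) ∧ betaVal β a = x}

/-!
Write `β` for the multinacci number of order `n` and `γ` for the one of order `n - 1`. The equation
defining `β` says that the words `0 1ⁿ` and `1 0ⁿ` have the same value, so an `n`-fold run in a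
univoque sequence forces all earlier digits to equal the digit of the run. A nonconstant univoque
sequence therefore has a tail without `n`-fold runs. Conversely a sequence without such runs has all
its tail values in `[1/(β-1) - 1, 1]`, and it is univoque unless one of them is an endpoint, which
happens for countably many values only. So `U_β` has the dimension of the set of values of the
sequences without `n`-fold runs.

Up to a reflection, this set is covered by copies of itself scaled by `β⁻¹, …, β⁻⁽ⁿ⁻¹⁾`, one for
each length of the first run; with `β ^ r = γ` the equation `∑ β⁻ʲʳ = 1` is the one defining `γ`,
and the dimension is at most `r = log γ / log β`. For the lower bound, record at each place whether
the digit is repeated by the next one. This turns the sequences without `n`-fold runs into those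
without `n - 1` consecutive ones; evaluating the latter in base `γ` gives an `r`-Hölder map, whose
image contains `[0, 1)` because greedy expansions in base `γ` have no `n - 1` consecutive ones.
-/

section HausdorffDimension

open Filter Finset Topology
open scoped NNReal ENNReal

theorem exists_cover_of_subset_iUnion_image {X ι : Type*} [PseudoEMetricSpace X] [Fintype ι]
    {f : ι → X → X} {L : ι → ℝ≥0} {ρ : ℝ≥0} {r : ℝ} {K : Set X}
    (hf : ∀ i, LipschitzWith (L i) (f i)) (hL : ∀ i, L i ≤ ρ) (hr : 0 ≤ r)
    (hsum : ∑ i, L i ^ r ≤ 1) (hsub : K ⊆ ⋃ i, f i '' K) (k : ℕ) :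
    ∃ t : (Fin k → ι) → Set X, K ⊆ ⋃ w, t w ∧
      (∀ w, Metric.ediam (t w) ≤ ρ ^ k * Metric.ediam K) ∧
      ∑ w, Metric.ediam (t w) ^ r ≤ Metric.ediam K ^ r := by
  induction k with
  | zero => exact ⟨fun _ => K, by rw [Set.iUnion_const], by simp, by simp⟩
  | succ k ih =>
    obtain ⟨t, hcover, hdiam, htotal⟩ := ih
    have hpiece (i : ι) (s : Set X) : Metric.ediam (f i '' s) ≤ L i * Metric.ediam s :=
      (hf i).ediam_image_le s
    refine ⟨fun w => f (w 0) '' t (Fin.tail w), fun x hx => ?_, fun w => ?_, ?_⟩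
    · obtain ⟨i, y, hy, hyx⟩ := Set.mem_iUnion.1 (hsub hx)
      obtain ⟨w, hw⟩ := Set.mem_iUnion.1 (hcover hy)
      exact Set.mem_iUnion.2 ⟨Fin.cons i w, y, hw, hyx⟩
    · calc Metric.ediam (f (w 0) '' t (Fin.tail w)) ≤ L (w 0) * Metric.ediam (t (Fin.tail w)) :=
            hpiece _ _
        _ ≤ ρ * (ρ ^ k * Metric.ediam K) := by
          gcongr
          exacts [hL _, hdiam _]
        _ = ρ ^ (k + 1) * Metric.ediam K := by rw [pow_succ', mul_assoc]
    · calc ∑ w : Fin (k + 1) → ι, Metric.ediam (f (w 0) '' t (Fin.tail w)) ^ r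
          = ∑ q : ι × (Fin k → ι), Metric.ediam (f q.1 '' t q.2) ^ r :=
            ((Fin.consEquiv fun _ => ι).sum_comp _).symm
        _ ≤ ∑ q : ι × (Fin k → ι), (L q.1 : ℝ≥0∞) ^ r * Metric.ediam (t q.2) ^ r :=
            sum_le_sum fun q _ => by
              rw [← ENNReal.mul_rpow_of_nonneg _ _ hr]
              exact ENNReal.rpow_le_rpow (hpiece _ _) hr
        _ = ((∑ i, L i ^ r : ℝ≥0) : ℝ≥0∞) * ∑ w, Metric.ediam (t w) ^ r := by
            simp_rw [Fintype.sum_prod_type, ENNReal.ofNNReal_finsetSum, sum_mul_sum,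
              ENNReal.coe_rpow_of_nonneg _ hr]
        _ ≤ 1 * Metric.ediam K ^ r := by
            gcongr
            exact_mod_cast hsum
        _ = Metric.ediam K ^ r := one_mul _

theorem dimH_le_of_subset_iUnion_image {X ι : Type*} [EMetricSpace X] [Fintype ι]
    {f : ι → X → X} {L : ι → ℝ≥0} {r : ℝ≥0} {K : Set X}
    (hf : ∀ i, LipschitzWith (L i) (f i)) (hL : ∀ i, L i < 1)
    (hsum : ∑ i, L i ^ (r : ℝ) ≤ 1) (hK : Metric.ediam K ≠ ∞) (hsub : K ⊆ ⋃ i, f i '' K) :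
    dimH K ≤ r := by
  borelize X
  obtain ⟨ρ, hLρ, hρ⟩ : ∃ ρ : ℝ≥0, (∀ i, L i ≤ ρ) ∧ ρ < 1 :=
    ⟨univ.sup L, fun i => le_sup (mem_univ i), (Finset.sup_lt_iff one_pos).2 fun i _ => hL i⟩
  choose t hcover hdiam htotal using
    exists_cover_of_subset_iUnion_image hf hLρ r.coe_nonneg hsum hsub
  have hmesh : Tendsto (fun k : ℕ => (ρ : ℝ≥0∞) ^ k * Metric.ediam K) atTop (𝓝 0) := by
    simpa using ENNReal.Tendsto.mul_const
      (ENNReal.tendsto_pow_atTop_nhds_zero_of_lt_one (by exact_mod_cast hρ)) (.inr hK)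
  refine dimH_le_of_hausdorffMeasure_ne_top <| ne_top_of_le_ne_top
    (ENNReal.rpow_ne_top_of_nonneg r.coe_nonneg hK) ?_
  exact (MeasureTheory.Measure.hausdorffMeasure_le_liminf_sum r K _ hmesh t
      (.of_forall hdiam) (.of_forall hcover)).trans
    (liminf_le_of_frequently_le' (Frequently.of_forall htotal))

theorem mul_finrank_le_dimH_of_holderOnWith {X E : Type*} [EMetricSpace X]
    [NormedAddCommGroup E] [NormedSpace ℝ E] [FiniteDimensional ℝ E] {C r : ℝ≥0} {f : X → E}
    {s : Set X} (hf : HolderOnWith C r f s) (hr : 0 < r) (hs : (interior (f '' s)).Nonempty) :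
    Module.finrank ℝ E * r ≤ dimH s := by
  have hdim := hf.dimH_image_le hr
  rw [Real.dimH_of_nonempty_interior hs] at hdim
  exact (ENNReal.le_div_iff_mul_le (.inl (by simpa using hr.ne')) (.inl ENNReal.coe_ne_top)).1 hdim

theorem holderOnWith_of_dist_le {X Y : Type*} [PseudoMetricSpace X] [PseudoMetricSpace Y]
    {C r : ℝ≥0} {f : X → Y} {s : Set X}
    (h : ∀ x ∈ s, ∀ y ∈ s, dist (f x) (f y) ≤ C * dist x y ^ (r : ℝ)) : HolderOnWith C r f s := by
  intro x hx y hy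
  rw [edist_nndist, edist_nndist, ← ENNReal.coe_rpow_of_nonneg _ r.coe_nonneg]
  exact_mod_cast h x hx y hy

theorem mul_finrank_le_dimH_image_of_dist_le {A X E : Type*} [MetricSpace X]
    [NormedAddCommGroup E] [NormedSpace ℝ E] [FiniteDimensional ℝ E] {C r : ℝ≥0} {φ : A → X}
    {ψ : A → E} {s : Set A} (hr : 0 < r)
    (h : ∀ a ∈ s, ∀ b ∈ s, dist (ψ a) (ψ b) ≤ C * dist (φ a) (φ b) ^ (r : ℝ))
    (hs : (interior (ψ '' s)).Nonempty) : Module.finrank ℝ E * r ≤ dimH (φ '' s) := by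
  have : Nonempty A := hs.mono interior_subset |>.of_image.to_type
  set g := Function.invFunOn φ s
  have hg_mem {a : A} (ha : a ∈ s) : g (φ a) ∈ s := Function.invFunOn_apply_mem ha
  have hg_eq {a : A} (ha : a ∈ s) : φ (g (φ a)) = φ a := Function.invFunOn_apply_eq ha
  have hψ {a : A} (ha : a ∈ s) : ψ (g (φ a)) = ψ a := by
    have hdist := h _ (hg_mem ha) _ ha
    rw [hg_eq ha, dist_self, Real.zero_rpow (by exact_mod_cast hr.ne'), mul_zero] at hdist
    exact dist_le_zero.1 hdist
  refine mul_finrank_le_dimH_of_holderOnWith (C := C) (f := ψ ∘ g)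
    (holderOnWith_of_dist_le ?_) hr ?_
  · rintro _ ⟨a, ha, rfl⟩ _ ⟨b, hb, rfl⟩
    simpa only [Function.comp_apply, hψ ha, hψ hb] using h a ha b hb
  · refine hs.mono (interior_mono ?_)
    rintro _ ⟨a, ha, rfl⟩
    exact ⟨φ a, ⟨a, ha, rfl⟩, hψ ha⟩

theorem lipschitzWith_const_add_mul (c d : ℝ) : LipschitzWith ‖d‖₊ fun x => c + d * x := by
  simpa [Function.comp_def] using (isometry_add_left c).lipschitz.comp (lipschitzWith_smul d)

end HausdorffDimension

namespace BetaExpansion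

open Filter Finset Topology
open scoped NNReal

/-- `a` is a 0-1 sequence, the digit condition of the definitions `UTilde` and `Uset`. -/
def IsBinary (a : ℕ → ℕ) : Prop := ∀ i, a i ≤ 1

/-- The `k`-fold left shift, which removes the first `k` digits. -/
def shift (k : ℕ) (a : ℕ → ℕ) : ℕ → ℕ := fun i => a (k + i)

/-- The reflection of a 0-1 sequence, which exchanges the two digits. The subtraction truncates,
so this is an involution only on 0-1 sequences. -/
def reflect (a : ℕ → ℕ) : ℕ → ℕ := fun i => 1 - a i

/-- The 0-1 sequences in which no digit occurs `n` times in a row. -/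
def runFree (n : ℕ) : Set (ℕ → ℕ) :=
  {a | IsBinary a ∧ ∀ c p, ¬ OccursAt (List.replicate n c) a p}

section Sequences

variable {a : ℕ → ℕ} {c k n p : ℕ}

theorem shift_zero (a : ℕ → ℕ) : shift 0 a = a :=
  funext fun i => by rw [shift, zero_add]

theorem shift_shift (k l : ℕ) (a : ℕ → ℕ) : shift l (shift k a) = shift (k + l) a :=
  funext fun i => by simp only [shift, add_assoc]

protected theorem IsBinary.shift (ha : IsBinary a) (k : ℕ) : IsBinary (shift k a) := fun _ => ha _

theorem isBinary_reflect (a : ℕ → ℕ) : IsBinary (reflect a) := fun _ => Nat.sub_le _ _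

theorem IsBinary.reflect_reflect (ha : IsBinary a) : reflect (reflect a) = a :=
  funext fun i => Nat.sub_sub_self (ha i)

theorem IsBinary.eq_zero_or_eq_one (ha : IsBinary a) (i : ℕ) : a i = 0 ∨ a i = 1 :=
  Nat.le_one_iff_eq_zero_or_eq_one.1 (ha i)

theorem occursAt_replicate : OccursAt (List.replicate n c) a p ↔ ∀ i < n, a (p + i) = c := by
  simp [OccursAt, Fin.forall_iff]

theorem occursAt_shift {w : List ℕ} : OccursAt w (shift k a) p ↔ OccursAt w a (k + p) := by
  simp only [OccursAt, shift, add_assoc]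

theorem exists_leading_run_of_not_occursAt (h : ¬ OccursAt (List.replicate n c) a 0) :
    ∃ j < n, (∀ i < j, a i = c) ∧ a j ≠ c := by
  simp only [occursAt_replicate, zero_add, not_forall] at h
  obtain ⟨i, hin, hi⟩ := h
  have hex : ∃ j, a j ≠ c := ⟨i, hi⟩
  exact ⟨Nat.find hex, (Nat.find_min' hex hi).trans_lt hin,
    fun j hj => not_not.1 (Nat.find_min hex hj), Nat.find_spec hex⟩

theorem shift_mem_runFree (ha : a ∈ runFree n) (k : ℕ) : shift k a ∈ runFree n :=
  ⟨ha.1.shift k, fun c p h => ha.2 c (k + p) (occursAt_shift.1 h)⟩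

theorem IsBinary.occursAt_reflect (ha : IsBinary a)
    (h : OccursAt (List.replicate n c) (reflect a) p) :
    OccursAt (List.replicate n (1 - c)) a p :=
  occursAt_replicate.2 fun i hi => by
    rw [← occursAt_replicate.1 h i hi, reflect, Nat.sub_sub_self (ha _)]

theorem reflect_mem_runFree (ha : a ∈ runFree n) : reflect a ∈ runFree n :=
  ⟨isBinary_reflect a, fun c p h => ha.2 (1 - c) p (ha.1.occursAt_reflect h)⟩

end Sequences

section Values

variable {β : ℝ} {a b : ℕ → ℕ} {c k : ℕ}

theorem hasSum_one_div_pow_succ (hβ : 1 < β) :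
    HasSum (fun i : ℕ => 1 / β ^ (i + 1)) (1 / (β - 1)) := by
  have hsub : β - 1 ≠ 0 := by linarith
  have hgeom := (hasSum_geometric_of_lt_one (inv_nonneg.2 (zero_le_one.trans hβ.le))
    (inv_lt_one_of_one_lt₀ hβ)).mul_left β⁻¹
  convert! hgeom using 1
  · funext i
    rw [← pow_succ', inv_pow, one_div]
  · field_simp

theorem IsBinary.digit_div_le (hβ : 1 < β) (ha : IsBinary a) (i : ℕ) :
    (a i : ℝ) / β ^ (i + 1) ≤ 1 / β ^ (i + 1) := by
  have : (a i : ℝ) ≤ 1 := by exact_mod_cast ha i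
  gcongr

theorem IsBinary.summable (hβ : 1 < β) (ha : IsBinary a) :
    Summable fun i => (a i : ℝ) / β ^ (i + 1) :=
  .of_nonneg_of_le (fun i => by positivity) (ha.digit_div_le hβ)
    (hasSum_one_div_pow_succ hβ).summable

theorem betaVal_nonneg (hβ : 0 ≤ β) (a : ℕ → ℕ) : 0 ≤ betaVal β a :=
  tsum_nonneg fun i => by positivity

theorem IsBinary.betaVal_le (hβ : 1 < β) (ha : IsBinary a) : betaVal β a ≤ 1 / (β - 1) :=
  (hasSum_one_div_pow_succ hβ).tsum_eq ▸
    (ha.summable hβ).tsum_le_tsum (ha.digit_div_le hβ) (hasSum_one_div_pow_succ hβ).summable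

theorem IsBinary.betaVal_mem_Icc (hβ : 1 < β) (ha : IsBinary a) :
    betaVal β a ∈ Set.Icc 0 (1 / (β - 1)) :=
  ⟨betaVal_nonneg (by linarith) a, ha.betaVal_le hβ⟩

theorem IsBinary.betaVal_eq_sum_add (hβ : 1 < β) (ha : IsBinary a) (k : ℕ) :
    betaVal β a = ∑ i ∈ range k, (a i : ℝ) / β ^ (i + 1) + betaVal β (shift k a) / β ^ k := by
  rw [betaVal, betaVal, ← (ha.summable hβ).sum_add_tsum_nat_add k, ← tsum_div_const]
  congr 2 with i
  rw [shift, add_comm k i, div_div, ← pow_add]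
  ring_nf

theorem IsBinary.betaVal_eq_head_add (hβ : 1 < β) (ha : IsBinary a) :
    betaVal β a = (a 0 + betaVal β (shift 1 a)) / β := by
  rw [ha.betaVal_eq_sum_add hβ 1]
  simp [add_div]

theorem IsBinary.betaVal_eq_of_leading_run (hβ : 1 < β) (ha : IsBinary a)
    (hrun : ∀ i < k, a i = c) :
    betaVal β a = c * ∑ i ∈ range k, 1 / β ^ (i + 1) + betaVal β (shift k a) / β ^ k := by
  rw [ha.betaVal_eq_sum_add hβ k, mul_sum]
  congr 1
  exact sum_congr rfl fun i hi => by rw [hrun i (mem_range.1 hi), mul_one_div]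

theorem IsBinary.betaVal_reflect (hβ : 1 < β) (ha : IsBinary a) :
    betaVal β (reflect a) = 1 / (β - 1) - betaVal β a := by
  rw [betaVal, betaVal, ← (hasSum_one_div_pow_succ hβ).tsum_eq,
    ← (hasSum_one_div_pow_succ hβ).summable.tsum_sub (ha.summable hβ)]
  exact tsum_congr fun i => by rw [reflect, Nat.cast_sub (ha i), Nat.cast_one, sub_div]

theorem betaVal_sub_eq_of_agree (hβ : 1 < β) (ha : IsBinary a) (hb : IsBinary b)
    (hagree : ∀ i < k, a i = b i) :
    betaVal β a - betaVal β b
      = (betaVal β (shift k a) - betaVal β (shift k b)) / β ^ k := by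
  rw [ha.betaVal_eq_sum_add hβ k, hb.betaVal_eq_sum_add hβ k,
    sum_congr rfl fun i hi => by rw [hagree i (mem_range.1 hi)], add_sub_add_left_eq_sub, sub_div]

theorem abs_betaVal_sub_le_of_agree (hβ : 1 < β) (ha : IsBinary a) (hb : IsBinary b)
    (hagree : ∀ i < k, a i = b i) :
    |betaVal β a - betaVal β b| ≤ 1 / (β - 1) / β ^ k := by
  have hβ0 : 0 < β := by linarith
  rw [betaVal_sub_eq_of_agree hβ ha hb hagree, abs_div, abs_of_pos (pow_pos hβ0 k)]
  gcongr
  simpa [Real.dist_eq] using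
    Real.dist_le_of_mem_Icc ((ha.shift k).betaVal_mem_Icc hβ) ((hb.shift k).betaVal_mem_Icc hβ)

theorem dimH_image_betaVal_shift_le (hβ : 1 < β) (s : Set ℝ) (k : ℕ) :
    dimH (betaVal β '' {a | IsBinary a ∧ betaVal β (shift k a) ∈ s}) ≤ dimH s := by
  induction k with
  | zero =>
    refine dimH_mono ?_
    rintro _ ⟨a, ⟨-, ha⟩, rfl⟩
    rwa [shift_zero] at ha
  | succ k ih =>
    have hsub : betaVal β '' {a | IsBinary a ∧ betaVal β (shift (k + 1) a) ∈ s} ⊆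
        ⋃ d : ℕ, (fun x => d / β + β⁻¹ * x) ''
          (betaVal β '' {a | IsBinary a ∧ betaVal β (shift k a) ∈ s}) := by
      rintro _ ⟨a, ⟨ha, has⟩, rfl⟩
      refine Set.mem_iUnion.2 ⟨a 0, _, ⟨shift 1 a, ⟨ha.shift 1, ?_⟩, rfl⟩, ?_⟩
      · rwa [shift_shift, add_comm]
      · rw [ha.betaVal_eq_head_add hβ]
        ring
    refine (dimH_mono hsub).trans ?_
    rw [dimH_iUnion]
    exact iSup_le fun d => ((lipschitzWith_const_add_mul _ _).dimH_image_le _).trans ih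

end Values

/-- `β` is the multinacci number of order `n`: the root greater than `1` of
`x ^ n = x ^ (n - 1) + ⋯ + x + 1`. -/
structure IsMultinacci (n : ℕ) (β : ℝ) : Prop where
  one_lt : 1 < β
  pow_eq_sum : β ^ n = ∑ i ∈ range n, β ^ i

section Multinacci

variable {β : ℝ} {a b : ℕ → ℕ} {k n : ℕ}

theorem IsMultinacci.pos (hβ : IsMultinacci n β) : 0 < β := zero_lt_one.trans hβ.one_lt

theorem IsMultinacci.order_pos (hβ : IsMultinacci n β) : 0 < n := by
  rw [Nat.pos_iff_ne_zero]
  rintro rfl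
  simpa using hβ.pow_eq_sum

theorem IsMultinacci.lt_two (hβ : IsMultinacci n β) : β < 2 := by
  have hgeom : (β - 1) * β ^ n = β ^ n - 1 := hβ.pow_eq_sum ▸ mul_geom_sum β n
  have hpow : 0 < β ^ n := pow_pos hβ.pos n
  nlinarith

theorem IsMultinacci.sum_one_div_pow_succ (hβ : IsMultinacci n β) :
    ∑ i ∈ range n, 1 / β ^ (i + 1) = 1 := by
  have hβ0 := hβ.pos
  calc ∑ i ∈ range n, 1 / β ^ (i + 1) = ∑ i ∈ range n, β ^ (n - 1 - i) / β ^ n :=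
        sum_congr rfl fun i hi => by
          rw [div_eq_div_iff (by positivity) (by positivity), one_mul, ← pow_add]
          congr 1
          have := mem_range.1 hi
          omega
    _ = (∑ i ∈ range n, β ^ i) / β ^ n := by rw [← sum_div, sum_range_reflect (β ^ ·)]
    _ = 1 := by rw [← hβ.pow_eq_sum, div_self (by positivity)]

theorem IsMultinacci.one_lt_one_div_sub_one (hβ : IsMultinacci n β) : 1 < 1 / (β - 1) := by
  rw [one_lt_div (sub_pos.2 hβ.one_lt)]
  linarith [hβ.lt_two]

theorem IsMultinacci.one_le_betaVal (hβ : IsMultinacci n β) (ha : IsBinary a)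
    (hrun : OccursAt (List.replicate n 1) a 0) : 1 ≤ betaVal β a := by
  have hlead : ∀ i < n, a i = 1 := by simpa using occursAt_replicate.1 hrun
  rw [ha.betaVal_eq_of_leading_run hβ.one_lt hlead, hβ.sum_one_div_pow_succ]
  have htail : 0 ≤ betaVal β (shift n a) / β ^ n :=
    div_nonneg (betaVal_nonneg hβ.pos.le _) (pow_pos hβ.pos n).le
  simpa using htail

-- Replacing `t` by `t / β` over and over gives the bound `1`.
theorem IsMultinacci.betaVal_le_one_add_div (hβ : IsMultinacci n β) {t : ℝ} (ht : 0 ≤ t)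
    (hbound : ∀ b, IsBinary b → (∀ p, ¬ OccursAt (List.replicate n 1) b p) → betaVal β b ≤ 1 + t)
    (ha : IsBinary a) (hrun : ∀ p, ¬ OccursAt (List.replicate n 1) a p) :
    betaVal β a ≤ 1 + t / β := by
  have hβ0 := hβ.pos
  obtain ⟨j, hjn, hlead, hj⟩ := exists_leading_run_of_not_occursAt (hrun 0)
  have hzero : shift j a 0 = 0 := (ha.eq_zero_or_eq_one j).resolve_right hj
  have htail : betaVal β (shift (j + 1) a) ≤ 1 + t :=
    hbound _ (ha.shift _) fun p h => hrun _ (occursAt_shift.1 h)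
  have hsum : ∑ i ∈ range (j + 1), 1 / β ^ (i + 1) ≤ 1 :=
    (sum_le_sum_of_subset_of_nonneg (range_mono hjn) fun i _ _ => by positivity).trans_eq
      hβ.sum_one_div_pow_succ
  calc betaVal β a
      = ∑ i ∈ range j, 1 / β ^ (i + 1) + betaVal β (shift (j + 1) a) / β ^ (j + 1) := by
        rw [ha.betaVal_eq_of_leading_run hβ.one_lt hlead,
          (ha.shift j).betaVal_eq_head_add hβ.one_lt, hzero, shift_shift]
        simp only [Nat.cast_one, Nat.cast_zero, one_mul, zero_add, div_div, pow_succ']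
    _ ≤ ∑ i ∈ range j, 1 / β ^ (i + 1) + (1 + t) / β ^ (j + 1) := by gcongr
    _ = ∑ i ∈ range (j + 1), 1 / β ^ (i + 1) + t / β ^ (j + 1) := by
        rw [sum_range_succ, add_div, add_assoc]
    _ ≤ 1 + t / β := by
        gcongr
        exact le_self_pow₀ hβ.one_lt.le j.succ_ne_zero

theorem IsMultinacci.betaVal_le_one (hβ : IsMultinacci n β) (ha : IsBinary a)
    (hrun : ∀ p, ¬ OccursAt (List.replicate n 1) a p) : betaVal β a ≤ 1 := by
  have hβ1 := hβ.one_lt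
  have : 0 < β - 1 := sub_pos.2 hβ1
  have hiter (k : ℕ) : ∀ b, IsBinary b → (∀ p, ¬ OccursAt (List.replicate n 1) b p) →
      betaVal β b ≤ 1 + 1 / (β - 1) / β ^ k := by
    induction k with
    | zero =>
      intro b hb _
      rw [pow_zero, div_one]
      exact (hb.betaVal_le hβ1).trans (le_add_of_nonneg_left zero_le_one)
    | succ k ih =>
      intro b hb hrun
      rw [pow_succ, ← div_div]
      exact hβ.betaVal_le_one_add_div (by positivity) ih hb hrun
  have hlim : Tendsto (fun k => 1 + 1 / (β - 1) / β ^ k) atTop (𝓝 1) := by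
    simpa using (tendsto_const_nhds.div_atTop
      (tendsto_pow_atTop_atTop_of_one_lt hβ1)).const_add 1
  exact ge_of_tendsto' hlim fun k => hiter k a ha hrun

theorem IsMultinacci.betaVal_mem_Icc (hβ : IsMultinacci n β) (ha : a ∈ runFree n) :
    betaVal β a ∈ Set.Icc (1 / (β - 1) - 1) 1 := by
  refine ⟨?_, hβ.betaVal_le_one ha.1 (ha.2 1)⟩
  have hreflect := hβ.betaVal_le_one (isBinary_reflect a) ((reflect_mem_runFree ha).2 1)
  rw [ha.1.betaVal_reflect hβ.one_lt] at hreflect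
  linarith

theorem IsMultinacci.le_abs_betaVal_sub (hβ : IsMultinacci n β) (ha : a ∈ runFree n)
    (hb : b ∈ runFree n) (hagree : ∀ i < k, a i = b i) (hne : a k ≠ b k) :
    (1 / (β - 1) - 1) / β ^ (k + 1) ≤ |betaVal β a - betaVal β b| := by
  wlog hlt : b k < a k generalizing a b
  · rw [abs_sub_comm]
    exact this hb ha (fun i hi => (hagree i hi).symm) hne.symm (hne.lt_of_le (not_lt.1 hlt))
  have hβ0 := hβ.pos
  have hak : shift k a 0 = 1 := (ha.1 k).antisymm (Nat.one_le_of_lt hlt)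
  have hbk : shift k b 0 = 0 := Nat.lt_one_iff.1 (hlt.trans_le (ha.1 k))
  have htail_a := (hβ.betaVal_mem_Icc (shift_mem_runFree ha (k + 1))).1
  have htail_b := (hβ.betaVal_mem_Icc (shift_mem_runFree hb (k + 1))).2
  refine le_trans ?_ (le_abs_self _)
  rw [betaVal_sub_eq_of_agree hβ.one_lt ha.1 hb.1 hagree,
    (ha.1.shift k).betaVal_eq_head_add hβ.one_lt, (hb.1.shift k).betaVal_eq_head_add hβ.one_lt,
    hak, hbk, shift_shift, shift_shift, ← sub_div, div_div, ← pow_succ']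
  refine div_le_div_of_nonneg_right ?_ (by positivity)
  push_cast
  linarith

end Multinacci

section Uniqueness

variable {β : ℝ} {a b : ℕ → ℕ} {c k n p q : ℕ}

theorem Uset_eq_image_UTilde (hβ : 1 < β) : Uset β = betaVal β '' UTilde β := by
  ext x
  constructor
  · rintro ⟨-, a, ⟨ha, rfl⟩, huniq⟩
    exact ⟨a, ⟨ha, fun b hb hval => huniq b ⟨hb, hval⟩⟩, rfl⟩
  · rintro ⟨a, ⟨ha, huniq⟩, rfl⟩
    exact ⟨IsBinary.betaVal_mem_Icc hβ ha, a, ⟨ha, rfl⟩, fun b hb => huniq b hb.1 hb.2⟩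

theorem reflect_mem_UTilde (hβ : 1 < β) (ha : a ∈ UTilde β) : reflect a ∈ UTilde β := by
  refine ⟨isBinary_reflect a, fun b (hb : IsBinary b) hval => ?_⟩
  have hval' : betaVal β (reflect b) = betaVal β a := by
    rw [hb.betaVal_reflect hβ, hval, IsBinary.betaVal_reflect hβ ha.1, sub_sub_cancel]
  rw [← ha.2 _ (isBinary_reflect b) hval', hb.reflect_reflect]

theorem mem_UTilde_of_tail_bounds (hβ : 1 < β) (ha : IsBinary a)
    (hzero : ∀ k, a k = 0 → betaVal β (shift (k + 1) a) < 1)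
    (hone : ∀ k, a k = 1 → 1 / (β - 1) - 1 < betaVal β (shift (k + 1) a)) :
    a ∈ UTilde β := by
  refine ⟨ha, fun b (hb : IsBinary b) hval => ?_⟩
  by_contra hne
  have : 0 < β := by linarith
  obtain ⟨k, hagree, hk⟩ : ∃ k, (∀ i < k, b i = a i) ∧ b k ≠ a k :=
    ⟨_, fun _ => PiNat.apply_eq_of_lt_firstDiff, PiNat.apply_firstDiff_ne hne⟩
  have htails : (b k : ℝ) + betaVal β (shift (k + 1) b) = a k + betaVal β (shift (k + 1) a) := by
    have hsub := betaVal_sub_eq_of_agree hβ hb ha hagree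
    rw [hval, sub_self, eq_comm, div_eq_zero_iff, or_iff_left (by positivity), sub_eq_zero,
      (hb.shift k).betaVal_eq_head_add hβ, (ha.shift k).betaVal_eq_head_add hβ,
      div_left_inj' (by positivity), shift_shift, shift_shift] at hsub
    exact hsub
  obtain ⟨hb_nonneg, hb_le⟩ := (hb.shift (k + 1)).betaVal_mem_Icc hβ
  rcases ha.eq_zero_or_eq_one k with hak | hak
  · have hbk : b k = 1 := (hb.eq_zero_or_eq_one k).resolve_left (hak ▸ hk)
    rw [hak, hbk] at htails
    push_cast at htails
    linarith [hzero k hak]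
  · have hbk : b k = 0 := (hb.eq_zero_or_eq_one k).resolve_right (hak ▸ hk)
    rw [hak, hbk] at htails
    push_cast at htails
    linarith [hone k hak]

theorem IsMultinacci.betaVal_eq_of_swap (hβ : IsMultinacci n β) (ha : IsBinary a)
    (hb : IsBinary b) (ha_zero : a 0 = 0) (ha_ones : OccursAt (List.replicate n 1) a 1)
    (hb_one : b 0 = 1) (hb_zeros : OccursAt (List.replicate n 0) b 1)
    (htail : shift (1 + n) b = shift (1 + n) a) : betaVal β b = betaVal β a := by
  rw [ha.betaVal_eq_head_add hβ.one_lt, hb.betaVal_eq_head_add hβ.one_lt, ha_zero, hb_one,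
    (ha.shift 1).betaVal_eq_of_leading_run hβ.one_lt (occursAt_replicate.1 ha_ones),
    (hb.shift 1).betaVal_eq_of_leading_run hβ.one_lt (occursAt_replicate.1 hb_zeros),
    hβ.sum_one_div_pow_succ, shift_shift, shift_shift, htail]
  push_cast
  ring

theorem IsMultinacci.not_occursAt_ones_of_zero (hβ : IsMultinacci n β) (ha : a ∈ UTilde β)
    (hp : a p = 0) : ¬ OccursAt (List.replicate n 1) a (p + 1) := by
  intro hones
  obtain ⟨ha_bin, huniq⟩ := ha
  set b : ℕ → ℕ := fun i => if i = p then 1 else if p < i ∧ i ≤ p + n then 0 else a i with hb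
  have hb_bin : IsBinary b := fun i => by
    have := ha_bin i
    simp only [hb]
    split_ifs <;> omega
  have hb_lt : ∀ i < p, b i = a i := fun i hi => by
    simp only [hb]
    rw [if_neg (by omega), if_neg (by omega)]
  have hb_zeros : OccursAt (List.replicate n 0) b (p + 1) := occursAt_replicate.2 fun i hi => by
    simp only [hb]
    rw [if_neg (by omega), if_pos (by omega)]
  have hb_tail : shift (1 + n) (shift p b) = shift (1 + n) (shift p a) := funext fun i => by
    simp only [hb, shift]
    rw [if_neg (by omega), if_neg (by omega)]
  have hb_one : b p = 1 := if_pos rfl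
  have hval : betaVal β b = betaVal β a := by
    rw [← sub_eq_zero, betaVal_sub_eq_of_agree hβ.one_lt hb_bin ha_bin hb_lt,
      hβ.betaVal_eq_of_swap (IsBinary.shift ha_bin p) (hb_bin.shift p) hp
        (occursAt_shift.2 hones) hb_one (occursAt_shift.2 hb_zeros) hb_tail, sub_self, zero_div]
  have := congrFun (huniq b hb_bin hval) p
  omega

theorem IsMultinacci.eq_one_of_occursAt_ones (hβ : IsMultinacci n β) (ha : a ∈ UTilde β)
    (hones : OccursAt (List.replicate n 1) a p) (hq : q ≤ p) : a q = 1 := by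
  suffices hprev : OccursAt (List.replicate n 1) a q from
    occursAt_replicate.1 hprev 0 hβ.order_pos
  induction hq using Nat.decreasingInduction with
  | self => exact hones
  | of_succ q _ ih =>
    have haq : a q = 1 := (IsBinary.eq_zero_or_eq_one ha.1 q).resolve_left fun hzero =>
      hβ.not_occursAt_ones_of_zero ha hzero ih
    refine occursAt_replicate.2 fun i hi => ?_
    cases i with
    | zero => exact haq
    | succ i =>
      have hdigit := occursAt_replicate.1 ih i (by omega)
      rwa [add_assoc, add_comm 1 i] at hdigit

theorem IsMultinacci.eq_of_occursAt_replicate (hβ : IsMultinacci n β) (ha : a ∈ UTilde β)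
    (hrun : OccursAt (List.replicate n c) a p) (hq : q ≤ p) : a q = c := by
  have ha_bin : IsBinary a := ha.1
  have hc : a p = c := occursAt_replicate.1 hrun 0 hβ.order_pos
  rcases ha_bin.eq_zero_or_eq_one p with hp | hp
  · obtain rfl : c = 0 := hc ▸ hp
    have hreflect : OccursAt (List.replicate n 1) (reflect a) p :=
      (isBinary_reflect a).occursAt_reflect (by rwa [ha_bin.reflect_reflect])
    have := hβ.eq_one_of_occursAt_ones (reflect_mem_UTilde hβ.one_lt ha) hreflect hq
    rw [reflect] at this
    omega
  · obtain rfl : c = 1 := hc ▸ hp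
    exact hβ.eq_one_of_occursAt_ones ha hrun hq

theorem IsMultinacci.shift_mem_runFree_of_ne (hβ : IsMultinacci n β) (ha : a ∈ UTilde β)
    (hk : a k ≠ a (k + 1)) : shift (k + 1) a ∈ runFree n := by
  refine ⟨IsBinary.shift ha.1 _, fun c p hrun => hk ?_⟩
  have hconst : ∀ q ≤ k + 1 + p, a q = c := fun q hq =>
    hβ.eq_of_occursAt_replicate ha (occursAt_shift.1 hrun) hq
  rw [hconst k (by omega), hconst (k + 1) (by omega)]

theorem IsMultinacci.dimH_Uset_le (hβ : IsMultinacci n β) :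
    dimH (Uset β) ≤ dimH (betaVal β '' runFree n) := by
  have hsub : Uset β ⊆ Set.range (fun c : ℕ => betaVal β fun _ => c) ∪
      ⋃ k, betaVal β '' {a | IsBinary a ∧ betaVal β (shift k a) ∈ betaVal β '' runFree n} := by
    rw [Uset_eq_image_UTilde hβ.one_lt]
    rintro _ ⟨a, ha, rfl⟩
    by_cases hconst : ∀ k, a k = a (k + 1)
    · have ha_const : a = fun _ => a 0 := funext fun k => by
        induction k with
        | zero => rfl
        | succ k ih => rw [← hconst k, ih]
      exact .inl ⟨a 0, congrArg (betaVal β) ha_const.symm⟩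
    · obtain ⟨k, hk⟩ := not_forall.1 hconst
      exact .inr (Set.mem_iUnion.2 ⟨k + 1, a,
        ⟨ha.1, Set.mem_image_of_mem _ (hβ.shift_mem_runFree_of_ne ha hk)⟩, rfl⟩)
  refine (dimH_mono hsub).trans ?_
  rw [dimH_union, (Set.countable_range _).dimH_zero, zero_max, dimH_iUnion]
  exact iSup_le (dimH_image_betaVal_shift_le hβ.one_lt _)

theorem IsMultinacci.le_dimH_Uset (hβ : IsMultinacci n β) :
    dimH (betaVal β '' runFree n) ≤ dimH (Uset β) := by
  set endpoints : Set ℝ := {1 / (β - 1) - 1, 1}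
  have hsub : betaVal β '' runFree n ⊆ Uset β ∪
      ⋃ k, betaVal β '' {a | IsBinary a ∧ betaVal β (shift k a) ∈ endpoints} := by
    rintro _ ⟨a, ha, rfl⟩
    by_cases hboundary : ∃ k, betaVal β (shift k a) ∈ endpoints
    · obtain ⟨k, hk⟩ := hboundary
      exact .inr (Set.mem_iUnion.2 ⟨k, a, ⟨ha.1, hk⟩, rfl⟩)
    · left
      have hinterior (k : ℕ) : betaVal β (shift k a) ∈ Set.Ioo (1 / (β - 1) - 1) 1 := by
        rw [← Set.Icc_sdiff_both]
        exact ⟨hβ.betaVal_mem_Icc (shift_mem_runFree ha k), not_exists.1 hboundary k⟩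
      rw [Uset_eq_image_UTilde hβ.one_lt]
      exact Set.mem_image_of_mem _ (mem_UTilde_of_tail_bounds hβ.one_lt ha.1
        (fun k _ => (hinterior _).2) fun k _ => (hinterior _).1)
  refine (dimH_mono hsub).trans ?_
  rw [dimH_union, dimH_iUnion]
  refine max_le le_rfl (iSup_le fun k => (dimH_image_betaVal_shift_le hβ.one_lt _ k).trans ?_)
  rw [(Set.toFinite endpoints).dimH_zero]
  exact zero_le

end Uniqueness

section UpperBound

/-- The 0-1 sequences with first digit `0` in which no digit occurs `n` times in a row. Their values
form a self-similar set, with one piece for each possible length of the leading run of zeros. -/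
def zeroLedRunFree (n : ℕ) : Set (ℕ → ℕ) := {a | a ∈ runFree n ∧ a 0 = 0}

variable {β γ : ℝ} {m : ℕ}

theorem image_betaVal_zeroLedRunFree_subset (hβ : 1 < β) (m : ℕ) :
    betaVal β '' zeroLedRunFree (m + 1) ⊆
      ⋃ j : Fin m, (fun x => 1 / (β - 1) / β ^ (j + 1 : ℕ) + -(1 / β ^ (j + 1 : ℕ)) * x) ''
        (betaVal β '' zeroLedRunFree (m + 1)) := by
  rintro _ ⟨a, ⟨ha, ha_zero⟩, rfl⟩
  obtain ⟨_ | j, hjm, hlead, hj⟩ := exists_leading_run_of_not_occursAt (ha.2 0 0)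
  · exact absurd ha_zero hj
  have htail := shift_mem_runFree ha (j + 1)
  have htail_one : a (j + 1) = 1 := (ha.1.eq_zero_or_eq_one _).resolve_left hj
  refine Set.mem_iUnion.2 ⟨⟨j, by omega⟩, _, ⟨reflect (shift (j + 1) a),
    ⟨reflect_mem_runFree htail, by simp [reflect, shift, htail_one]⟩, rfl⟩, ?_⟩
  rw [htail.1.betaVal_reflect hβ, ha.1.betaVal_eq_of_leading_run hβ hlead]
  push_cast
  ring

theorem image_betaVal_runFree_subset (hβ : 1 < β) (n : ℕ) :
    betaVal β '' runFree n ⊆ betaVal β '' zeroLedRunFree n ∪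
      (fun x => 1 / (β - 1) + -1 * x) '' (betaVal β '' zeroLedRunFree n) := by
  rintro _ ⟨a, ha, rfl⟩
  rcases ha.1.eq_zero_or_eq_one 0 with hzero | hone
  · exact .inl ⟨a, ⟨ha, hzero⟩, rfl⟩
  · refine .inr ⟨_, ⟨reflect a, ⟨reflect_mem_runFree ha, by simp [reflect, hone]⟩, rfl⟩, ?_⟩
    rw [ha.1.betaVal_reflect hβ]
    ring

theorem IsMultinacci.dimH_image_runFree_le (hγ : IsMultinacci m γ) (hβ : 1 < β) {r : ℝ≥0}
    (hpow : β ^ (r : ℝ) = γ) : dimH (betaVal β '' runFree (m + 1)) ≤ r := by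
  have hβ0 : 0 < β := by linarith
  have hratio (j : ℕ) : ‖-(1 / β ^ (j + 1))‖ ^ (r : ℝ) = 1 / γ ^ (j + 1) := by
    rw [norm_neg, Real.norm_of_nonneg (by positivity),
      Real.div_rpow zero_le_one (by positivity), Real.one_rpow, ← Real.rpow_pow_comm hβ0.le, hpow]
  have hmoran : ∑ j : Fin m, ‖-(1 / β ^ (j + 1 : ℕ))‖₊ ^ (r : ℝ) ≤ 1 := by
    rw [← NNReal.coe_le_coe]
    push_cast [hratio]
    rw [Fin.sum_univ_eq_sum_range fun j => 1 / γ ^ (j + 1), hγ.sum_one_div_pow_succ]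
  have hzeroLed : dimH (betaVal β '' zeroLedRunFree (m + 1)) ≤ r := by
    refine dimH_le_of_subset_iUnion_image (fun _ => lipschitzWith_const_add_mul _ _) (fun j => ?_)
      hmoran ?_ (image_betaVal_zeroLedRunFree_subset hβ m)
    · rw [← NNReal.coe_lt_coe, coe_nnnorm, norm_neg, Real.norm_of_nonneg (by positivity)]
      exact (div_lt_one (by positivity)).2 (one_lt_pow₀ hβ j.1.succ_ne_zero)
    · refine ((Metric.isBounded_Icc 0 (1 / (β - 1))).subset ?_).ediam_ne_top
      rintro _ ⟨a, ha, rfl⟩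
      exact ha.1.1.betaVal_mem_Icc hβ
  refine (dimH_mono (image_betaVal_runFree_subset hβ _)).trans ?_
  rw [dimH_union]
  exact max_le hzeroLed (((lipschitzWith_const_add_mul _ _).dimH_image_le _).trans hzeroLed)

end UpperBound

section GreedyExpansion

/-- The transformation `x ↦ γ x mod 1` of the unit interval that generates greedy expansions. -/
noncomputable def betaTransform (γ x : ℝ) : ℝ := Int.fract (γ * x)

/-- The greedy expansion in base `γ` of a point of `[0, 1)`, whose digits are the integer parts
`⌊γ Tᵏ y⌋` along the orbit of `y` under `T = betaTransform γ`. -/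
noncomputable def greedyDigits (γ y : ℝ) (k : ℕ) : ℕ := ⌊γ * (betaTransform γ)^[k] y⌋₊

variable {γ y : ℝ} {m : ℕ}

theorem iterate_betaTransform_mem_Ico (hy : y ∈ Set.Ico (0 : ℝ) 1) :
    ∀ k, (betaTransform γ)^[k] y ∈ Set.Ico (0 : ℝ) 1
  | 0 => hy
  | k + 1 => by
    rw [Function.iterate_succ_apply']
    exact ⟨Int.fract_nonneg _, Int.fract_lt_one _⟩

theorem shift_greedyDigits (γ y : ℝ) (k : ℕ) :
    shift k (greedyDigits γ y) = greedyDigits γ ((betaTransform γ)^[k] y) :=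
  funext fun i => by rw [shift, greedyDigits, greedyDigits, add_comm, Function.iterate_add_apply]

theorem isBinary_greedyDigits (hγ0 : 0 ≤ γ) (hγ2 : γ ≤ 2) (hy : y ∈ Set.Ico (0 : ℝ) 1) :
    IsBinary (greedyDigits γ y) := by
  intro k
  obtain ⟨hnonneg, hlt⟩ := iterate_betaTransform_mem_Ico (γ := γ) hy k
  refine Nat.lt_succ_iff.1 ((Nat.floor_lt (mul_nonneg hγ0 hnonneg)).2 ?_)
  push_cast
  nlinarith

theorem greedyDigits_add_iterate_betaTransform (hγ : 0 ≤ γ) (hy : y ∈ Set.Ico (0 : ℝ) 1) (k : ℕ) :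
    greedyDigits γ y k + (betaTransform γ)^[k + 1] y = γ * (betaTransform γ)^[k] y := by
  rw [Function.iterate_succ_apply', betaTransform, greedyDigits,
    natCast_floor_eq_intCast_floor (mul_nonneg hγ (iterate_betaTransform_mem_Ico hy k).1),
    Int.floor_add_fract]

theorem sum_greedyDigits_div_pow (hγ : 0 < γ) (hy : y ∈ Set.Ico (0 : ℝ) 1) (k : ℕ) :
    ∑ i ∈ range k, (greedyDigits γ y i : ℝ) / γ ^ (i + 1) =
      y - (betaTransform γ)^[k] y / γ ^ k := by
  induction k with
  | zero => simp
  | succ k ih =>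
    rw [sum_range_succ, ih, eq_sub_of_add_eq (greedyDigits_add_iterate_betaTransform hγ.le hy k)]
    field_simp
    ring

theorem betaVal_greedyDigits (hγ : 1 < γ) (hy : y ∈ Set.Ico (0 : ℝ) 1) :
    betaVal γ (greedyDigits γ y) = y := by
  have hγ0 : 0 < γ := by linarith
  refine HasSum.tsum_eq ((hasSum_iff_tendsto_nat_of_nonneg (fun i => by positivity) y).2 ?_)
  simp_rw [sum_greedyDigits_div_pow hγ0 hy]
  have hremainder : Tendsto (fun k => (betaTransform γ)^[k] y / γ ^ k) atTop (𝓝 0) :=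
    squeeze_zero (fun k => div_nonneg (iterate_betaTransform_mem_Ico hy k).1 (by positivity))
      (fun k => div_le_div_of_nonneg_right (iterate_betaTransform_mem_Ico hy k).2.le
        (by positivity))
      (tendsto_const_nhds.div_atTop (tendsto_pow_atTop_atTop_of_one_lt hγ))
  simpa using hremainder.const_sub y

theorem IsMultinacci.not_occursAt_ones_greedyDigits (hγ : IsMultinacci m γ)
    (hy : y ∈ Set.Ico (0 : ℝ) 1) (p : ℕ) :
    ¬ OccursAt (List.replicate m 1) (greedyDigits γ y) p := by
  intro hones
  have horbit := iterate_betaTransform_mem_Ico (γ := γ) hy p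
  have hle := hγ.one_le_betaVal
    ((isBinary_greedyDigits hγ.pos.le hγ.lt_two.le hy).shift p) (occursAt_shift.2 hones)
  rw [shift_greedyDigits, betaVal_greedyDigits hγ.one_lt horbit] at hle
  exact hle.not_gt horbit.2

end GreedyExpansion

section RepeatIndicator

/-- The sequence recording at which positions a digit of `a` is repeated by the next one. It turns
a run of `n + 1` equal digits into a run of `n` ones. -/
def repeatIndicator (a : ℕ → ℕ) : ℕ → ℕ := fun k => if a k = a (k + 1) then 1 else 0

/-- The 0-1 sequence with first digit `0` whose repetitions are recorded by `e`. -/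
def ofRepeatIndicator (e : ℕ → ℕ) : ℕ → ℕ
  | 0 => 0
  | k + 1 => if e k = 1 then ofRepeatIndicator e k else 1 - ofRepeatIndicator e k

variable {a b e : ℕ → ℕ} {c k m p : ℕ}

theorem isBinary_repeatIndicator (a : ℕ → ℕ) : IsBinary (repeatIndicator a) := fun k => by
  rw [repeatIndicator]
  split_ifs <;> decide

theorem isBinary_ofRepeatIndicator (e : ℕ → ℕ) : IsBinary (ofRepeatIndicator e)
  | 0 => zero_le_one
  | k + 1 => by
    have := isBinary_ofRepeatIndicator e k
    rw [ofRepeatIndicator]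
    split_ifs <;> omega

theorem repeatIndicator_ofRepeatIndicator (he : IsBinary e) :
    repeatIndicator (ofRepeatIndicator e) = e := by
  funext k
  rw [repeatIndicator, ofRepeatIndicator]
  rcases he.eq_zero_or_eq_one k with hk | hk
  · rw [hk, if_neg zero_ne_one, if_neg (by omega)]
  · rw [hk, if_pos rfl, if_pos rfl]

theorem occursAt_ones_repeatIndicator (hrun : OccursAt (List.replicate (m + 1) c) a p) :
    OccursAt (List.replicate m 1) (repeatIndicator a) p :=
  occursAt_replicate.2 fun i hi => if_pos <| by
    rw [add_assoc, occursAt_replicate.1 hrun i (by omega),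
      occursAt_replicate.1 hrun (i + 1) (by omega)]

theorem ofRepeatIndicator_mem_runFree (he : IsBinary e)
    (hones : ∀ p, ¬ OccursAt (List.replicate m 1) e p) : ofRepeatIndicator e ∈ runFree (m + 1) := by
  refine ⟨isBinary_ofRepeatIndicator e, fun c p hrun => hones p ?_⟩
  rw [← repeatIndicator_ofRepeatIndicator he]
  exact occursAt_ones_repeatIndicator hrun

theorem repeatIndicator_eq_of_agree (hagree : ∀ i < k, a i = b i) :
    ∀ i < k - 1, repeatIndicator a i = repeatIndicator b i := fun i hi => by
  rw [repeatIndicator, repeatIndicator, hagree i (by omega), hagree (i + 1) (by omega)]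

end RepeatIndicator

section LowerBound

variable {β γ : ℝ} {a b : ℕ → ℕ} {m n : ℕ}

theorem IsMultinacci.Ico_subset_image_repeatIndicator (hγ : IsMultinacci m γ) :
    Set.Ico 0 1 ⊆ (fun a => betaVal γ (repeatIndicator a)) '' runFree (m + 1) := by
  intro y hy
  have hbin := isBinary_greedyDigits hγ.pos.le hγ.lt_two.le hy
  refine ⟨_, ofRepeatIndicator_mem_runFree hbin (hγ.not_occursAt_ones_greedyDigits hy), ?_⟩
  simp only [repeatIndicator_ofRepeatIndicator hbin, betaVal_greedyDigits hγ.one_lt hy]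

theorem abs_betaVal_repeatIndicator_sub_le_of_agree (hγ : 1 < γ) {k : ℕ}
    (hagree : ∀ i < k, a i = b i) :
    |betaVal γ (repeatIndicator a) - betaVal γ (repeatIndicator b)| ≤ γ / (γ - 1) / γ ^ k := by
  have hsub : 0 < γ - 1 := sub_pos.2 hγ
  calc |betaVal γ (repeatIndicator a) - betaVal γ (repeatIndicator b)|
      ≤ 1 / (γ - 1) / γ ^ (k - 1) := abs_betaVal_sub_le_of_agree hγ (isBinary_repeatIndicator a)
        (isBinary_repeatIndicator b) (repeatIndicator_eq_of_agree hagree)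
    _ = γ / (γ - 1) / γ ^ (k - 1 + 1) := by
      have : γ ≠ 0 := by linarith
      rw [pow_succ]
      field_simp
    _ ≤ γ / (γ - 1) / γ ^ k := by
      gcongr
      · linarith
      · omega

theorem IsMultinacci.abs_betaVal_repeatIndicator_sub_le (hβ : IsMultinacci n β) (hγ : 1 < γ)
    {r : ℝ} (hr : 0 ≤ r) (hpow : β ^ r = γ) (ha : a ∈ runFree n) (hb : b ∈ runFree n) :
    |betaVal γ (repeatIndicator a) - betaVal γ (repeatIndicator b)| ≤
      γ / (γ - 1) / ((1 / (β - 1) - 1) / β) ^ r * |betaVal β a - betaVal β b| ^ r := by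
  have hβ0 := hβ.pos
  have : 0 < γ := by linarith
  have hsub : 0 < γ - 1 := sub_pos.2 hγ
  set gap := (1 / (β - 1) - 1) / β
  have hgap : 0 < gap := div_pos (sub_pos.2 hβ.one_lt_one_div_sub_one) hβ0
  rcases eq_or_ne a b with rfl | hne
  · rw [sub_self, abs_zero]
    positivity
  have hagree : ∀ i < PiNat.firstDiff a b, a i = b i := fun _ => PiNat.apply_eq_of_lt_firstDiff
  set k := PiNat.firstDiff a b
  have hsep : gap / β ^ k ≤ |betaVal β a - betaVal β b| := by
    rw [div_div, ← pow_succ']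
    exact hβ.le_abs_betaVal_sub ha hb hagree (PiNat.apply_firstDiff_ne hne)
  calc |betaVal γ (repeatIndicator a) - betaVal γ (repeatIndicator b)|
      ≤ γ / (γ - 1) / γ ^ k := abs_betaVal_repeatIndicator_sub_le_of_agree hγ hagree
    _ = γ / (γ - 1) / gap ^ r * (gap / β ^ k) ^ r := by
      rw [Real.div_rpow hgap.le (by positivity), ← Real.rpow_pow_comm hβ0.le, hpow]
      field_simp
    _ ≤ γ / (γ - 1) / gap ^ r * |betaVal β a - betaVal β b| ^ r := by gcongr

theorem IsMultinacci.le_dimH_image_runFree (hβ : IsMultinacci (m + 1) β) (hγ : IsMultinacci m γ)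
    {r : ℝ≥0} (hr : 0 < r) (hpow : β ^ (r : ℝ) = γ) :
    r ≤ dimH (betaVal β '' runFree (m + 1)) := by
  have hconst : 0 ≤ γ / (γ - 1) / ((1 / (β - 1) - 1) / β) ^ (r : ℝ) :=
    div_nonneg (div_nonneg hγ.pos.le (sub_pos.2 hγ.one_lt).le) (Real.rpow_nonneg
      (div_nonneg (sub_pos.2 hβ.one_lt_one_div_sub_one).le hβ.pos.le) _)
  have hinterior : (interior
      ((fun a => betaVal γ (repeatIndicator a)) '' runFree (m + 1))).Nonempty := by
    refine Set.Nonempty.mono (interior_mono hγ.Ico_subset_image_repeatIndicator) ?_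
    rw [interior_Ico]
    exact Set.nonempty_Ioo.2 one_pos
  simpa using mul_finrank_le_dimH_image_of_dist_le (C := ⟨_, hconst⟩) (φ := betaVal β) hr
    (fun a ha b hb => hβ.abs_betaVal_repeatIndicator_sub_le hγ.one_lt r.coe_nonneg hpow ha hb)
    hinterior

end LowerBound

theorem IsMultinacci.dimH_Uset {β γ : ℝ} {m : ℕ} (hβ : IsMultinacci (m + 1) β)
    (hγ : IsMultinacci m γ) : dimH (Uset β) = ENNReal.ofReal (Real.logb β γ) := by
  have hr : 0 < Real.logb β γ := Real.logb_pos hβ.one_lt hγ.one_lt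
  have hpow : β ^ ((Real.logb β γ).toNNReal : ℝ) = γ := by
    rw [Real.coe_toNNReal _ hr.le, Real.rpow_logb hβ.pos hβ.one_lt.ne' hγ.pos]
  calc dimH (Uset β) = dimH (betaVal β '' runFree (m + 1)) :=
        le_antisymm hβ.dimH_Uset_le hβ.le_dimH_Uset
    _ = ENNReal.ofReal (Real.logb β γ) :=
        le_antisymm (hγ.dimH_image_runFree_le hβ.one_lt hpow)
          (hβ.le_dimH_image_runFree hγ (Real.toNNReal_pos.2 hr) hpow)

end BetaExpansion

/-- for the multinacci numbers `β_n` (`n ≥ 3`),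
`dim_H (U_{β_n}) = log β_{n-1} / log β_n`. -/
theorem statement6 (n : ℕ) (hn : 3 ≤ n) (βn βm : ℝ)
    (hβn : βn ∈ Set.Ioo (1 : ℝ) 2)
    (hβnroot : βn ^ n = ∑ i ∈ Finset.range n, βn ^ i)
    (hβm : βm ∈ Set.Ioo (1 : ℝ) 2)
    (hβmroot : βm ^ (n - 1) = ∑ i ∈ Finset.range (n - 1), βm ^ i) :
    dimH (Uset βn) = ENNReal.ofReal (Real.log βm / Real.log βn) := by
  obtain ⟨m, rfl⟩ : ∃ m, n = m + 1 := ⟨n - 1, by omega⟩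
  have hβ : BetaExpansion.IsMultinacci (m + 1) βn := ⟨hβn.1, hβnroot⟩
  have hγ : BetaExpansion.IsMultinacci m βm := ⟨hβm.1, hβmroot⟩
  exact hβ.dimH_Uset hγ
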